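/- Let n be a positive integer, and let S be the sum of all odd binomial coefficients in the n-th row of Pascal's triangle, i.e., S = ∑_{0 ≤ k ≤ n, binom(n,k) odd} binom(n, k). Then ν₂(S) ≥ s₂(n), with equality if and only if the binary expansion of n does not contain two adjacent 1s, i.e., for every i, n does not have both bit i and bit i+1 equal to 1. -/

import Mathlib

/-- `s2 n` is the number of ones in the binary expansion of `n`. -/
def s2 (n : ℕ) : ℕ := (Nat.digits 2 n).sum

/-!
Split off the last binary digit of the row number. The theorem of Lucas turns a sum over the odd
entries of row `2 * m` or `2 * m + 1` into one over the odd entries of row `m`, at the price of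
a weight, since
`choose (2 * m) (2 * j) = choose m j * ∏ t < j, (2 * m - 2 * t - 1) / (2 * t + 1)`.
All weights that arise are functions `∑ I, c I * ∏ i ∈ I, 2 * bᵢ` of the binary digits `bᵢ` of `j`
with `c I ∈ ℤ_[2]`. They form a ring, and on odd rows the sum of the values of such a function at
`2 * j` and `2 * j + 1`, weighted by the binomial coefficients, gains a factor `2`. So every digit
`1` of `n` contributes a factor `2`. Modulo `2` the weights that come from the constant `1` can be
replaced by `1` again, except that row `2 * m + 1` contributes an additional factor `m + 1`, which
is even exactly when the last two binary digits of `2 * m + 1` are both `1`.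
-/

open Finset

section DoubledBitRing

/-- The functions on `ℕ` satisfying the recursive condition defining `doubledBitRing` for the `d`
lowest binary digits of the argument. -/
def doubledBitRingLevel (A : Type*) [CommRing A] : ℕ → Subring (ℕ → A)
  | 0 => ⊤
  | d + 1 =>
    { carrier := {f | (fun j => f (2 * j)) ∈ doubledBitRingLevel A d ∧
        ∃ h ∈ doubledBitRingLevel A d, ∀ j, f (2 * j + 1) = f (2 * j) + 2 * h j}
      zero_mem' := ⟨zero_mem _, 0, zero_mem _, by simp⟩
      one_mem' := ⟨one_mem _, 0, zero_mem _, by simp⟩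
      add_mem' := by
        rintro f g ⟨hf, h, hh, hfh⟩ ⟨hg, k, hk, hgk⟩
        refine ⟨add_mem hf hg, h + k, add_mem hh hk, fun j => ?_⟩
        simp only [Pi.add_apply, hfh, hgk]
        ring
      mul_mem' := by
        rintro f g ⟨hf, h, hh, hfh⟩ ⟨hg, k, hk, hgk⟩
        refine ⟨mul_mem hf hg, _, add_mem (add_mem (mul_mem hf hk) (mul_mem hh hg))
          (mul_mem (ofNat_mem _ 2) (mul_mem hh hk)), fun j => ?_⟩
        simp only [Pi.mul_apply, Pi.add_apply, Pi.ofNat_apply, hfh, hgk]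
        ring
      neg_mem' := by
        rintro f ⟨hf, h, hh, hfh⟩
        refine ⟨neg_mem hf, -h, neg_mem hh, fun j => ?_⟩
        simp only [Pi.neg_apply, hfh]
        ring }

/-- The ring of functions `f : ℕ → A` that are, possibly infinite, `A`-combinations of products of
distinct doubled binary digits `2 * bᵢ` of the argument. When `2` is regular, it is the largest set
of functions stable under passing from `f` to `j ↦ f (2 * j)` and to
`j ↦ (f (2 * j + 1) - f (2 * j)) / 2`; the levels express this without division. -/
def doubledBitRing (A : Type*) [CommRing A] : Subring (ℕ → A) :=
  ⨅ d, doubledBitRingLevel A d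

variable {A : Type*} [CommRing A]

namespace doubledBitRing

lemma mem_iff_forall_level {f : ℕ → A} :
    f ∈ doubledBitRing A ↔ ∀ d, f ∈ doubledBitRingLevel A d :=
  Subring.mem_iInf

lemma const_mem (a : A) : (fun _ : ℕ => a) ∈ doubledBitRing A := by
  refine mem_iff_forall_level.2 fun d => ?_
  induction d with
  | zero => trivial
  | succ d ih => exact ⟨ih, 0, zero_mem _, by simp⟩

lemma two_mul_natCast_mem : (fun j : ℕ => 2 * (j : A)) ∈ doubledBitRing A := by
  refine mem_iff_forall_level.2 fun d => ?_
  induction d with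
  | zero => trivial
  | succ d ih =>
    refine ⟨?_, 1, one_mem _, fun j => by push_cast [Pi.one_apply]; ring⟩
    convert mul_mem (ofNat_mem _ 2) ih using 2 with j
    simp

lemma comp_two_mul_mem {f : ℕ → A} (hf : f ∈ doubledBitRing A) :
    (fun j => f (2 * j)) ∈ doubledBitRing A :=
  mem_iff_forall_level.2 fun d => (mem_iff_forall_level.1 hf (d + 1)).1

lemma comp_two_mul_add_one_mem {f : ℕ → A} (hf : f ∈ doubledBitRing A) :
    (fun j => f (2 * j + 1)) ∈ doubledBitRing A := by
  refine mem_iff_forall_level.2 fun d => ?_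
  obtain ⟨he, h, hh, hfh⟩ := mem_iff_forall_level.1 hf (d + 1)
  simp only [hfh]
  exact add_mem he (mul_mem (ofNat_mem _ 2) hh)

lemma mem_of_mul_eq_one {f g : ℕ → A} (hf : f ∈ doubledBitRing A) (hfg : ∀ j, f j * g j = 1) :
    g ∈ doubledBitRing A := by
  refine mem_iff_forall_level.2 fun d => ?_
  induction d generalizing f g with
  | zero => trivial
  | succ d ih =>
    obtain ⟨-, h, hh, hfh⟩ := mem_iff_forall_level.1 hf (d + 1)
    have he := ih (comp_two_mul_mem hf) fun j => hfg (2 * j)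
    have ho := ih (comp_two_mul_add_one_mem hf) fun j => hfg (2 * j + 1)
    refine ⟨he, _, neg_mem (mul_mem hh (mul_mem he ho)), fun j => ?_⟩
    simp only [Pi.neg_apply, Pi.mul_apply]
    linear_combination g (2 * j) * hfg (2 * j + 1) - g (2 * j + 1) * hfg (2 * j)
      - g (2 * j) * g (2 * j + 1) * hfh j

-- Two consecutive steps of the recurrence combine into one step of a recurrence of the same shape.
lemma mem_of_affine_recurrence {p q v : ℕ → A}
    (hp₀ : (fun j => p (2 * j)) ∈ doubledBitRing A)
    (hp₁ : (fun j => p (2 * j + 1)) ∈ doubledBitRing A)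
    (hq₀ : (fun j => q (2 * j)) ∈ doubledBitRing A)
    (hq₁ : (fun j => q (2 * j + 1)) ∈ doubledBitRing A)
    (hv : ∀ j, v (j + 1) = v j + 2 * (p j + q j * v j)) : v ∈ doubledBitRing A := by
  refine mem_iff_forall_level.2 fun d => ?_
  induction d generalizing p q v with
  | zero => trivial
  | succ d ih =>
    have two_mul_mem {f : ℕ → A} (hf : f ∈ doubledBitRing A) := mul_mem (ofNat_mem _ 2) hf
    have hP := add_mem (add_mem hp₀ hp₁) (two_mul_mem (mul_mem hq₁ hp₀))
    have hQ := add_mem (add_mem hq₀ hq₁) (two_mul_mem (mul_mem hq₁ hq₀))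
    have he : (fun j => v (2 * j)) ∈ doubledBitRingLevel A d := by
      refine ih (comp_two_mul_mem hP) (comp_two_mul_add_one_mem hP) (comp_two_mul_mem hQ)
        (comp_two_mul_add_one_mem hQ) fun j => ?_
      simp only [Pi.add_apply, Pi.mul_apply, Pi.ofNat_apply, mul_add_one, hv]
      ring
    exact ⟨he, _, add_mem (mem_iff_forall_level.1 hp₀ d)
      (mul_mem (mem_iff_forall_level.1 hq₀ d) he), fun j => hv (2 * j)⟩

lemma exists_eq_one_add_two_mul_of_recurrence {r u : ℕ → A}
    (hr₀ : (fun j => r (2 * j)) ∈ doubledBitRing A)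
    (hr₁ : (fun j => r (2 * j + 1)) ∈ doubledBitRing A)
    (hu₀ : u 0 = 1) (hu : ∀ j, u (j + 1) = u j * (1 + 4 * r j)) :
    ∃ h ∈ doubledBitRing A, ∀ j, u j = 1 + 2 * h j := by
  let h : ℕ → A := fun j => ∑ t ∈ range j, 2 * r t * u t
  have hh : ∀ j, u j = 1 + 2 * h j := fun j => by
    induction j with
    | zero => simp [h, hu₀]
    | succ j ih =>
      rw [hu, show h (j + 1) = h j + 2 * r j * u j from sum_range_succ _ _]
      linear_combination ih
  refine ⟨h, mem_of_affine_recurrence (p := r) (q := 2 * r) hr₀ hr₁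
    (mul_mem (ofNat_mem _ 2) hr₀) (mul_mem (ofNat_mem _ 2) hr₁) fun j => ?_, hh⟩
  rw [show h (j + 1) = h j + 2 * r j * u j from sum_range_succ _ _, hh, Pi.mul_apply,
    Pi.ofNat_apply]
  ring

lemma exists_odd_eq_even_add [NoZeroDivisors A] [NeZero (2 : A)] {f : ℕ → A}
    (hf : f ∈ doubledBitRing A) :
    ∃ h ∈ doubledBitRing A, ∀ j, f (2 * j + 1) = f (2 * j) + 2 * h j := by
  obtain ⟨-, h, -, hfh⟩ := mem_iff_forall_level.1 hf 1
  refine ⟨h, mem_iff_forall_level.2 fun d => ?_, hfh⟩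
  obtain ⟨-, k, hk, hfk⟩ := mem_iff_forall_level.1 hf (d + 1)
  have : h = k := funext fun j =>
    mul_left_cancel₀ two_ne_zero (add_left_cancel ((hfh j).symm.trans (hfk j)))
  rwa [this]

end doubledBitRing

end DoubledBitRing

section OddRow

/-- The positions of the odd entries in row `n` of Pascal's triangle. -/
def oddRow (n : ℕ) : Finset ℕ := (range (n + 1)).filter fun k => Odd (n.choose k)

lemma oddRow_zero : oddRow 0 = {0} := rfl

lemma le_of_odd_choose {n k : ℕ} (h : Odd (n.choose k)) : k ≤ n :=
  not_lt.1 fun hnk => by simp [Nat.choose_eq_zero_of_lt hnk] at h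

lemma odd_choose_two_mul_add_iff {m x j y : ℕ} (hx : x < 2) (hy : y < 2) :
    Odd ((2 * m + x).choose (2 * j + y)) ↔ Odd (x.choose y) ∧ Odd (m.choose j) := by
  have lucas := Choose.choose_modEq_choose_mod_mul_choose_div_nat (p := 2)
    (n := 2 * m + x) (k := 2 * j + y)
  rw [show (2 * m + x) % 2 = x by omega, show (2 * j + y) % 2 = y by omega,
    show (2 * m + x) / 2 = m by omega, show (2 * j + y) / 2 = j by omega] at lucas
  rw [← Nat.odd_mul, Nat.odd_iff, Nat.odd_iff, lucas]

variable {M : Type*} [AddCommMonoid M]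

lemma sum_range_two_mul (f : ℕ → M) (N : ℕ) :
    ∑ k ∈ range (2 * N), f k = ∑ j ∈ range N, (f (2 * j) + f (2 * j + 1)) := by
  induction N with
  | zero => simp
  | succ N ih => rw [mul_add_one, sum_range_succ, sum_range_succ, ih, sum_range_succ, add_assoc]

lemma sum_oddRow_eq_sum_range {n N : ℕ} (hN : n < N) (f : ℕ → M) :
    ∑ k ∈ oddRow n, f k = ∑ k ∈ range N, if Odd (n.choose k) then f k else 0 := by
  rw [← sum_filter]
  refine sum_congr (ext fun k => ?_) fun _ _ => rfl
  simp only [oddRow, mem_filter, mem_range, and_congr_left_iff]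
  intro h
  have := le_of_odd_choose h
  omega

lemma sum_oddRow_two_mul (m : ℕ) (f : ℕ → M) :
    ∑ k ∈ oddRow (2 * m), f k = ∑ j ∈ oddRow m, f (2 * j) := by
  have even_col (j : ℕ) : Odd ((2 * m).choose (2 * j)) ↔ Odd (m.choose j) := by
    simpa using odd_choose_two_mul_add_iff (m := m) (j := j) zero_lt_two zero_lt_two
  have odd_col (j : ℕ) : ¬ Odd ((2 * m).choose (2 * j + 1)) := by
    simpa using (odd_choose_two_mul_add_iff (m := m) (j := j) zero_lt_two one_lt_two).not
  rw [sum_oddRow_eq_sum_range (N := 2 * (m + 1)) (by omega),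
    sum_oddRow_eq_sum_range m.lt_succ_self, sum_range_two_mul]
  simp only [even_col, odd_col, if_false, add_zero]

lemma sum_oddRow_two_mul_add_one (m : ℕ) (f : ℕ → M) :
    ∑ k ∈ oddRow (2 * m + 1), f k = ∑ j ∈ oddRow m, (f (2 * j) + f (2 * j + 1)) := by
  have even_col (j : ℕ) : Odd ((2 * m + 1).choose (2 * j)) ↔ Odd (m.choose j) := by
    simpa using odd_choose_two_mul_add_iff (m := m) (j := j) one_lt_two zero_lt_two
  have odd_col (j : ℕ) : Odd ((2 * m + 1).choose (2 * j + 1)) ↔ Odd (m.choose j) := by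
    simpa using odd_choose_two_mul_add_iff (m := m) (j := j) one_lt_two one_lt_two
  rw [sum_oddRow_eq_sum_range (N := 2 * (m + 1)) (by omega),
    sum_oddRow_eq_sum_range m.lt_succ_self, sum_range_two_mul]
  simp only [even_col, odd_col, ← ite_add_zero]

end OddRow

section BinaryDigits

lemma s2_zero : s2 0 = 0 := by simp [s2]

lemma s2_two_mul (m : ℕ) : s2 (2 * m) = s2 m := by
  rcases m.eq_zero_or_pos with rfl | hm
  · rfl
  · simp [s2, Nat.digits_def' one_lt_two (Nat.mul_pos two_pos hm)]

lemma s2_two_mul_add_one (m : ℕ) : s2 (2 * m + 1) = s2 m + 1 := by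
  rw [s2, Nat.digits_def' one_lt_two (Nat.succ_pos _), List.sum_cons,
    show (2 * m + 1) % 2 = 1 by omega, show (2 * m + 1) / 2 = m by omega, s2, add_comm]

/-- The binary expansion of `n` contains no two adjacent ones. -/
def NoAdjacentOnes (n : ℕ) : Prop :=
  ∀ i : ℕ, ¬(n.testBit i = true ∧ n.testBit (i + 1) = true)

lemma noAdjacentOnes_zero : NoAdjacentOnes 0 := by simp [NoAdjacentOnes]

lemma noAdjacentOnes_two_mul {m : ℕ} : NoAdjacentOnes (2 * m) ↔ NoAdjacentOnes m := by
  rw [NoAdjacentOnes, ← Nat.and_forall_add_one]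
  simp [NoAdjacentOnes, Nat.testBit_add_one]

lemma noAdjacentOnes_two_mul_add_one {m : ℕ} :
    NoAdjacentOnes (2 * m + 1) ↔ Even m ∧ NoAdjacentOnes m := by
  have hdiv : (2 * m + 1) / 2 = m := by omega
  rw [NoAdjacentOnes, ← Nat.and_forall_add_one]
  simp [NoAdjacentOnes, Nat.testBit_add_one, Nat.testBit_zero, hdiv, Nat.even_iff]

end BinaryDigits

section OddInv

lemma isUnit_one_add_two_mul (x : ℤ_[2]) : IsUnit (1 + 2 * x) := by
  have two_mem_nonunits : (2 : ℤ_[2]) ∈ nonunits ℤ_[2] := PadicInt.p_nonunit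
  rw [← sub_neg_eq_add, ← mul_neg]
  exact IsLocalRing.isUnit_one_sub_self_of_mem_nonunits _ (mul_mem_nonunits_left two_mem_nonunits)

/-- The inverse of the odd number `1 + 2 * x` in `ℤ_[2]`. -/
noncomputable def oddInv (x : ℤ_[2]) : ℤ_[2] := Ring.inverse (1 + 2 * x)

lemma one_add_two_mul_mul_oddInv (x : ℤ_[2]) : (1 + 2 * x) * oddInv x = 1 :=
  Ring.mul_inverse_cancel _ (isUnit_one_add_two_mul x)

lemma oddInv_mem_doubledBitRing {f : ℕ → ℤ_[2]} (hf : (fun j => 2 * f j) ∈ doubledBitRing ℤ_[2]) :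
    (fun j => oddInv (f j)) ∈ doubledBitRing ℤ_[2] :=
  doubledBitRing.mem_of_mul_eq_one (add_mem (one_mem _) hf) fun j =>
    one_add_two_mul_mul_oddInv (f j)

end OddInv

section BinomialRatio

/-- The ratio `choose (2 * m) (2 * j) / choose m j`, as a function of `j` that is also defined for
`m < j`. -/
noncomputable def evenRatio (m j : ℕ) : ℤ_[2] :=
  ∏ t ∈ range j, (2 * m - 2 * t - 1) * oddInv t

lemma evenRatio_zero (m : ℕ) : evenRatio m 0 = 1 := prod_range_zero _

lemma evenRatio_succ (m j : ℕ) :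
    evenRatio m (j + 1) = evenRatio m j * ((2 * m - 2 * j - 1) * oddInv j) :=
  prod_range_succ _ _

lemma cast_choose_succ_mul {R : Type*} [CommRing R] (n k : ℕ) :
    (n.choose (k + 1) : R) * (k + 1) = n.choose k * (n - k) := by
  rcases le_or_gt k n with h | h
  · rw [← Nat.cast_sub h]
    simpa using congrArg (Nat.cast (R := R)) (n.choose_succ_right_eq k)
  · simp [Nat.choose_eq_zero_of_lt h, Nat.choose_eq_zero_of_lt (h.trans k.lt_succ_self)]

lemma choose_two_mul_two_mul (m j : ℕ) :
    ((2 * m).choose (2 * j) : ℤ_[2]) = m.choose j * evenRatio m j := by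
  induction j with
  | zero => simp [evenRatio_zero]
  | succ j ih =>
    have h₀ := cast_choose_succ_mul (R := ℤ_[2]) (2 * m) (2 * j)
    have h₁ := cast_choose_succ_mul (R := ℤ_[2]) (2 * m) (2 * j + 1)
    have hm := cast_choose_succ_mul (R := ℤ_[2]) m j
    have hinv := one_add_two_mul_mul_oddInv j
    have hj : (2 * (j + 1) : ℤ_[2]) ≠ 0 := by exact_mod_cast (by omega : 2 * (j + 1) ≠ 0)
    refine mul_left_cancel₀ hj ?_
    rw [evenRatio_succ, show 2 * (j + 1) = 2 * j + 1 + 1 by ring]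
    push_cast at h₀ h₁
    linear_combination h₁
      - ((2 * m).choose (2 * j + 1) : ℤ_[2]) * (2 * m - 2 * j - 1) * hinv
      + (2 * m - 2 * j - 1) * oddInv j * h₀
      + (2 * m - 2 * j) * (2 * m - 2 * j - 1) * oddInv j * ih
      - 2 * evenRatio m j * (2 * m - 2 * j - 1) * oddInv j * hm

lemma choose_two_mul_add_one_two_mul (m j : ℕ) :
    ((2 * m + 1).choose (2 * j) : ℤ_[2]) =
      (2 * m + 1) * (2 * m).choose (2 * j) * oddInv (m - j) := by
  have hinv := one_add_two_mul_mul_oddInv (m - j)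
  rcases le_or_gt j m with h | h
  · have hchoose : ((2 * m).choose (2 * j) : ℤ_[2]) * (2 * m + 1) =
        (2 * m + 1).choose (2 * j) * (1 + 2 * (m - j)) := by
      have := congrArg (Nat.cast (R := ℤ_[2])) (Nat.choose_mul_succ_eq (2 * m) (2 * j))
      rw [show 2 * m + 1 - 2 * j = 1 + 2 * (m - j) by omega] at this
      push_cast [h] at this
      exact this
    linear_combination -((2 * m + 1).choose (2 * j) : ℤ_[2]) * hinv - oddInv (m - j) * hchoose
  · simp [Nat.choose_eq_zero_of_lt (show 2 * m < 2 * j by omega),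
      Nat.choose_eq_zero_of_lt (show 2 * m + 1 < 2 * j by omega)]

lemma choose_two_mul_add_one_two_mul_add_one (m j : ℕ) :
    ((2 * m + 1).choose (2 * j + 1) : ℤ_[2]) = (2 * m + 1) * (2 * m).choose (2 * j) * oddInv j := by
  have hchoose : (2 * m + 1) * ((2 * m).choose (2 * j) : ℤ_[2]) =
      (2 * m + 1).choose (2 * j + 1) * (1 + 2 * j) := by
    rw [add_comm (1 : ℤ_[2])]
    exact_mod_cast Nat.add_one_mul_choose_eq (2 * m) (2 * j)
  linear_combination -((2 * m + 1).choose (2 * j + 1) : ℤ_[2]) * one_add_two_mul_mul_oddInv j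
    - oddInv j * hchoose

lemma oddInv_natCast_mem_doubledBitRing : (fun j : ℕ => oddInv j) ∈ doubledBitRing ℤ_[2] :=
  oddInv_mem_doubledBitRing doubledBitRing.two_mul_natCast_mem

lemma oddInv_sub_natCast_mem_doubledBitRing (x : ℤ_[2]) :
    (fun j : ℕ => oddInv (x - j)) ∈ doubledBitRing ℤ_[2] := by
  refine oddInv_mem_doubledBitRing ?_
  simp only [mul_sub]
  exact sub_mem (doubledBitRing.const_mem _) doubledBitRing.two_mul_natCast_mem

lemma evenRatio_mem_doubledBitRing (m : ℕ) : evenRatio m ∈ doubledBitRing ℤ_[2] := by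
  have hq : (fun j : ℕ => (m - 1 - 2 * j) * oddInv j) ∈ doubledBitRing ℤ_[2] :=
    mul_mem (sub_mem (doubledBitRing.const_mem _) doubledBitRing.two_mul_natCast_mem)
      oddInv_natCast_mem_doubledBitRing
  refine doubledBitRing.mem_of_affine_recurrence (p := 0) (zero_mem _) (zero_mem _)
    (doubledBitRing.comp_two_mul_mem hq) (doubledBitRing.comp_two_mul_add_one_mem hq) fun j => ?_
  rw [evenRatio_succ, Pi.zero_apply]
  linear_combination evenRatio m j * one_add_two_mul_mul_oddInv j

lemma evenRatio_eq_one_add_two_mul {m : ℕ} (hm : Odd m) :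
    ∃ h ∈ doubledBitRing ℤ_[2], ∀ j, evenRatio m j = 1 + 2 * h j := by
  obtain ⟨c, rfl⟩ := hm
  let r : ℕ → ℤ_[2] := fun j => (c - j) * oddInv j
  have hr₀ : (fun j => r (2 * j)) ∈ doubledBitRing ℤ_[2] := by
    refine mul_mem (sub_mem (doubledBitRing.const_mem _) ?_)
      (doubledBitRing.comp_two_mul_mem oddInv_natCast_mem_doubledBitRing)
    simpa using doubledBitRing.two_mul_natCast_mem (A := ℤ_[2])
  have hr₁ : (fun j => r (2 * j + 1)) ∈ doubledBitRing ℤ_[2] := by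
    refine mul_mem (sub_mem (doubledBitRing.const_mem _) ?_)
      (doubledBitRing.comp_two_mul_add_one_mem oddInv_natCast_mem_doubledBitRing)
    simp only [Nat.cast_add, Nat.cast_mul, Nat.cast_ofNat, Nat.cast_one]
    exact add_mem doubledBitRing.two_mul_natCast_mem (one_mem _)
  refine doubledBitRing.exists_eq_one_add_two_mul_of_recurrence hr₀ hr₁ (evenRatio_zero _)
    fun j => ?_
  simp only [r]
  rw [evenRatio_succ]
  push_cast
  linear_combination evenRatio (2 * c + 1) j * one_add_two_mul_mul_oddInv j

-- Two consecutive factors of `evenRatio m` multiply to `1` modulo `4`, even when a single factor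
-- is `-1` modulo `4`.
lemma evenRatio_two_mul_eq_one_add_two_mul (m : ℕ) :
    ∃ h ∈ doubledBitRing ℤ_[2], ∀ j, evenRatio m (2 * j) = 1 + 2 * h j := by
  let r : ℕ → ℤ_[2] := fun j =>
    m * (m - 2 - 2 * (2 * j)) * (oddInv (2 * j : ℕ) * oddInv (2 * j + 1 : ℕ))
  have hr : r ∈ doubledBitRing ℤ_[2] :=
    mul_mem (mul_mem (natCast_mem _ m) (sub_mem (doubledBitRing.const_mem _)
      (mul_mem (ofNat_mem _ 2) doubledBitRing.two_mul_natCast_mem)))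
      (mul_mem (doubledBitRing.comp_two_mul_mem oddInv_natCast_mem_doubledBitRing)
        (doubledBitRing.comp_two_mul_add_one_mem oddInv_natCast_mem_doubledBitRing))
  refine doubledBitRing.exists_eq_one_add_two_mul_of_recurrence (r := r)
    (doubledBitRing.comp_two_mul_mem hr) (doubledBitRing.comp_two_mul_add_one_mem hr)
    (evenRatio_zero _) fun j => ?_
  have h₀ := one_add_two_mul_mul_oddInv (2 * j : ℕ)
  have h₁ := one_add_two_mul_mul_oddInv (2 * j + 1 : ℕ)
  simp only [r]
  rw [show 2 * (j + 1) = 2 * j + 1 + 1 by ring, evenRatio_succ, evenRatio_succ]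
  push_cast at h₀ h₁ ⊢
  generalize oddInv (2 * (j : ℤ_[2])) = a at *
  generalize oddInv (2 * (j : ℤ_[2]) + 1) = b at *
  linear_combination evenRatio m (2 * j) * ((1 + 2 * (2 * j)) * a * h₁ + h₀)

end BinomialRatio

section OddSum

/-- The sum of the odd entries of row `n` of Pascal's triangle, weighted by a function of the
position, as a linear form in the weight. -/
noncomputable def oddSum (n : ℕ) : (ℕ → ℤ_[2]) →ₗ[ℤ_[2]] ℤ_[2] :=
  ∑ k ∈ oddRow n, (n.choose k : ℤ_[2]) • LinearMap.proj k

lemma oddSum_apply (n : ℕ) (f : ℕ → ℤ_[2]) :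
    oddSum n f = ∑ k ∈ oddRow n, (n.choose k : ℤ_[2]) * f k := by
  simp [oddSum, LinearMap.sum_apply]

lemma oddSum_two_mul (m : ℕ) (f : ℕ → ℤ_[2]) :
    oddSum (2 * m) f = oddSum m fun j => evenRatio m j * f (2 * j) := by
  simp only [oddSum_apply, sum_oddRow_two_mul, choose_two_mul_two_mul, mul_assoc]

lemma oddSum_two_mul_add_one (m : ℕ) {f h : ℕ → ℤ_[2]}
    (hf : ∀ j, f (2 * j + 1) = f (2 * j) + 2 * h j) :
    oddSum (2 * m + 1) f = 2 * oddSum m fun j => (2 * m + 1) * evenRatio m j *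
      ((m + 1) * (oddInv j * oddInv (m - j)) * f (2 * j) + oddInv j * h j) := by
  simp only [oddSum_apply, sum_oddRow_two_mul_add_one, mul_sum]
  refine sum_congr rfl fun j _ => ?_
  rw [choose_two_mul_add_one_two_mul, choose_two_mul_add_one_two_mul_add_one,
    choose_two_mul_two_mul, hf]
  linear_combination (2 * m + 1) * (m.choose j : ℤ_[2]) * evenRatio m j * f (2 * j) *
    (-oddInv j * one_add_two_mul_mul_oddInv (m - j)
      - oddInv (m - j) * one_add_two_mul_mul_oddInv j)

theorem two_pow_s2_dvd_oddSum (n : ℕ) {f : ℕ → ℤ_[2]} (hf : f ∈ doubledBitRing ℤ_[2]) :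
    2 ^ s2 n ∣ oddSum n f := by
  induction n using Nat.evenOddRec generalizing f with
  | h0 => simp [s2_zero]
  | h_even m ih =>
    rw [s2_two_mul, oddSum_two_mul]
    exact ih (mul_mem (evenRatio_mem_doubledBitRing m) (doubledBitRing.comp_two_mul_mem hf))
  | h_odd m ih =>
    obtain ⟨h, hh, hfh⟩ := doubledBitRing.exists_odd_eq_even_add hf
    rw [s2_two_mul_add_one, oddSum_two_mul_add_one m hfh, pow_succ']
    refine mul_dvd_mul_left 2 (ih (mul_mem (mul_mem (doubledBitRing.const_mem _)
      (evenRatio_mem_doubledBitRing m)) (add_mem (mul_mem ?_ (doubledBitRing.comp_two_mul_mem hf))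
        (mul_mem oddInv_natCast_mem_doubledBitRing hh))))
    exact mul_mem (doubledBitRing.const_mem _)
      (mul_mem oddInv_natCast_mem_doubledBitRing (oddInv_sub_natCast_mem_doubledBitRing m))

lemma two_pow_s2_add_one_dvd_oddSum_sub (n : ℕ) {f g h : ℕ → ℤ_[2]}
    (hh : h ∈ doubledBitRing ℤ_[2]) (hfg : ∀ j, f j = g j + 2 * h j) :
    2 ^ (s2 n + 1) ∣ oddSum n f - oddSum n g := by
  have hsub : f - g = (2 : ℤ_[2]) • h := funext fun j => by simp [hfg]
  rw [← map_sub, hsub, map_smul, smul_eq_mul, pow_succ']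
  exact mul_dvd_mul_left 2 (two_pow_s2_dvd_oddSum n hh)

lemma two_pow_s2_add_one_dvd_oddSum_two_mul_sub (m : ℕ) {f g h : ℕ → ℤ_[2]}
    (hh : h ∈ doubledBitRing ℤ_[2]) (hfg : ∀ j, f (2 * j) = g (2 * j) + 2 * h j) :
    2 ^ (s2 (2 * m) + 1) ∣ oddSum (2 * m) f - oddSum (2 * m) g := by
  rw [s2_two_mul, oddSum_two_mul, oddSum_two_mul]
  refine two_pow_s2_add_one_dvd_oddSum_sub m (mul_mem (evenRatio_mem_doubledBitRing m) hh)
    fun j => ?_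
  rw [hfg, Pi.mul_apply]
  ring

lemma oddSum_two_mul_one (m : ℕ) : oddSum (2 * m) 1 = oddSum m (evenRatio m) := by
  simp [oddSum_two_mul]

/-- The weight by which `oddSum (2 * m + 1) 1` is reduced to row `m`. -/
noncomputable def oddRatio (m j : ℕ) : ℤ_[2] :=
  (2 * m + 1) * (m + 1) * (evenRatio m j * (oddInv j * oddInv (m - j)))

lemma oddSum_two_mul_add_one_one (m : ℕ) :
    oddSum (2 * m + 1) 1 = 2 * oddSum m (oddRatio m) := by
  rw [oddSum_two_mul_add_one m (h := 0) (by simp)]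
  congr 2 with j
  simp only [oddRatio, Pi.one_apply, Pi.zero_apply]
  ring

lemma two_pow_s2_add_one_dvd_oddSum_two_mul_one_sub (m : ℕ) :
    2 ^ (s2 m + 1) ∣ oddSum (2 * m) 1 - oddSum m 1 := by
  rw [oddSum_two_mul_one]
  obtain ⟨c, rfl | hm⟩ := m.even_or_odd'
  · obtain ⟨h, hh, hc⟩ := evenRatio_two_mul_eq_one_add_two_mul (2 * c)
    exact two_pow_s2_add_one_dvd_oddSum_two_mul_sub c hh hc
  · obtain ⟨h, hh, hc⟩ := evenRatio_eq_one_add_two_mul ⟨c, hm⟩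
    exact two_pow_s2_add_one_dvd_oddSum_sub m hh hc

lemma two_pow_s2_add_one_dvd_oddSum_oddRatio_of_odd {m : ℕ} (hm : Odd m) :
    2 ^ (s2 m + 1) ∣ oddSum m (oddRatio m) := by
  obtain ⟨c, hc⟩ := hm
  have hmem : (fun j => (2 * m + 1) * (c + 1) * (evenRatio m j * (oddInv j * oddInv (m - j)))) ∈
      doubledBitRing ℤ_[2] :=
    mul_mem (doubledBitRing.const_mem _)
      (mul_mem (evenRatio_mem_doubledBitRing m) (mul_mem oddInv_natCast_mem_doubledBitRing
        (oddInv_sub_natCast_mem_doubledBitRing m)))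
  have hcast : (m : ℤ_[2]) = 2 * c + 1 := by exact_mod_cast hc
  simpa using two_pow_s2_add_one_dvd_oddSum_sub m (f := oddRatio m) (g := 0) hmem fun j => by
    simp only [oddRatio, Pi.zero_apply]
    linear_combination (2 * m + 1) * (evenRatio m j * (oddInv j * oddInv (m - j))) * hcast

lemma oddRatio_two_mul_eq_one_add_two_mul {m : ℕ} (hm : Even m) :
    ∃ h ∈ doubledBitRing ℤ_[2], ∀ j, oddRatio m (2 * j) = 1 + 2 * h j := by
  obtain ⟨c, hc⟩ := hm
  obtain ⟨h, hh, hratio⟩ := evenRatio_two_mul_eq_one_add_two_mul m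
  let a : ℕ → ℤ_[2] := fun j => oddInv (2 * j : ℕ)
  let b : ℕ → ℤ_[2] := fun j => oddInv (m - (2 * j : ℕ))
  let k : ℕ → ℤ_[2] := fun j =>
    (c * (2 * m + 1) - 2 * m * (2 * j) + 2 * ((2 * j) * (2 * j))) * (a j * b j)
  have hk : k ∈ doubledBitRing ℤ_[2] := by
    have hx := doubledBitRing.two_mul_natCast_mem (A := ℤ_[2])
    exact mul_mem (add_mem (sub_mem (doubledBitRing.const_mem _)
      (mul_mem (doubledBitRing.const_mem _) hx)) (mul_mem (ofNat_mem _ 2) (mul_mem hx hx)))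
      (mul_mem (doubledBitRing.comp_two_mul_mem oddInv_natCast_mem_doubledBitRing)
        (doubledBitRing.comp_two_mul_mem (oddInv_sub_natCast_mem_doubledBitRing m)))
  have hcorrection (j : ℕ) : (2 * m + 1) * (m + 1) * (a j * b j) = 1 + 2 * k j := by
    have ha : (1 + 2 * (2 * j)) * a j = 1 := by
      simpa [a] using one_add_two_mul_mul_oddInv (2 * j : ℕ)
    have hb : (1 + 2 * (m - 2 * j)) * b j = 1 := by
      simpa [b] using one_add_two_mul_mul_oddInv (m - (2 * j : ℕ))
    have hcast : (m : ℤ_[2]) = c + c := by exact_mod_cast hc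
    simp only [k]
    linear_combination (1 + 2 * (2 * j)) * a j * hb + ha + (2 * m + 1) * (a j * b j) * hcast
  refine ⟨h + k + 2 * (h * k), add_mem (add_mem hh hk) (mul_mem (ofNat_mem _ 2) (mul_mem hh hk)),
    fun j => ?_⟩
  calc oddRatio m (2 * j)
      = evenRatio m (2 * j) * ((2 * m + 1) * (m + 1) * (a j * b j)) := by
        simp only [oddRatio, a, b]; ring
    _ = 1 + 2 * (h + k + 2 * (h * k)) j := by
        rw [hratio, hcorrection]
        simp only [Pi.add_apply, Pi.mul_apply, Pi.ofNat_apply]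
        ring

lemma two_pow_s2_add_one_dvd_oddSum_oddRatio_sub_of_even {m : ℕ} (hm : Even m) :
    2 ^ (s2 m + 1) ∣ oddSum m (oddRatio m) - oddSum m 1 := by
  obtain ⟨h, hh, hratio⟩ := oddRatio_two_mul_eq_one_add_two_mul hm
  obtain ⟨c, rfl⟩ := hm.two_dvd
  exact two_pow_s2_add_one_dvd_oddSum_two_mul_sub c hh hratio

theorem two_pow_s2_add_one_dvd_oddSum_one_iff (n : ℕ) :
    2 ^ (s2 n + 1) ∣ oddSum n 1 ↔ ¬ NoAdjacentOnes n := by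
  induction n using Nat.evenOddRec with
  | h0 =>
    have two_not_dvd_one : ¬ (2 : ℤ_[2]) ∣ 1 := PadicInt.prime_p.not_dvd_one
    simpa [s2_zero, noAdjacentOnes_zero, oddSum_apply, oddRow_zero] using two_not_dvd_one
  | h_even m ih =>
    rw [s2_two_mul, noAdjacentOnes_two_mul, ← ih]
    exact dvd_iff_dvd_of_dvd_sub (two_pow_s2_add_one_dvd_oddSum_two_mul_one_sub m)
  | h_odd m ih =>
    rw [s2_two_mul_add_one, oddSum_two_mul_add_one_one, pow_succ', mul_dvd_mul_iff_left two_ne_zero,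
      noAdjacentOnes_two_mul_add_one]
    rcases m.even_or_odd with hm | hm
    · rw [dvd_iff_dvd_of_dvd_sub (two_pow_s2_add_one_dvd_oddSum_oddRatio_sub_of_even hm), ih]
      simp only [hm, true_and]
    · simp only [two_pow_s2_add_one_dvd_oddSum_oddRatio_of_odd hm, Nat.not_even_iff_odd.2 hm,
        false_and, not_false_eq_true]

lemma cast_sum_oddRow_choose (n : ℕ) :
    ((∑ k ∈ oddRow n, n.choose k : ℕ) : ℤ_[2]) = oddSum n 1 := by
  simp [oddSum_apply]

lemma sum_oddRow_choose_ne_zero (n : ℕ) : ∑ k ∈ oddRow n, n.choose k ≠ 0 := by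
  have hzero : 0 ∈ oddRow n := by simp [oddRow]
  exact ne_of_gt (sum_pos' (fun _ _ => Nat.zero_le _) ⟨0, hzero, by simp⟩)

lemma le_padicValNat_sum_oddRow_choose_iff (n e : ℕ) :
    e ≤ padicValNat 2 (∑ k ∈ oddRow n, n.choose k) ↔ 2 ^ e ∣ oddSum n 1 := by
  rw [← padicValNat_dvd_iff_le (sum_oddRow_choose_ne_zero n), ← cast_sum_oddRow_choose]
  exact_mod_cast (PadicInt.pow_p_dvd_int_iff (p := 2) e (∑ k ∈ oddRow n, n.choose k : ℕ)).symm

end OddSum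

theorem stmt_8 (n : ℕ) (hn : 0 < n)
    (S : ℕ)
    (hS : S = ∑ k ∈ (Finset.range (n + 1)).filter (fun k => Odd (n.choose k)),
        n.choose k) :
    s2 n ≤ padicValNat 2 S ∧
      (padicValNat 2 S = s2 n ↔
        ∀ i : ℕ, ¬(n.testBit i = true ∧ n.testBit (i + 1) = true)) := by
  have hval (e : ℕ) : e ≤ padicValNat 2 S ↔ 2 ^ e ∣ oddSum n 1 :=
    hS ▸ le_padicValNat_sum_oddRow_choose_iff n e
  have hle : s2 n ≤ padicValNat 2 S := (hval _).2 (two_pow_s2_dvd_oddSum n (one_mem _))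
  have hlt : s2 n + 1 ≤ padicValNat 2 S ↔ ¬ NoAdjacentOnes n :=
    (hval _).trans (two_pow_s2_add_one_dvd_oddSum_one_iff n)
  refine ⟨hle, ?_⟩
  change _ ↔ NoAdjacentOnes n
  rw [← not_iff_not, ← hlt]
  omega
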